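/- arXiv:2310.09654 — 3 statements merged into one kernel-verified Lean document; each statement's English description precedes it below -/
import Mathlib

section
/- Let A be a commutative ring and suppose that for every i ∈ ℕ and every nonempty finite subset S of ℕ an element g^i_S ∈ A is given, satisfying g^i_S = 0 whenever |S| ≥ i + 2. For integers j ≥ 1 and i ≥ 0 define f^i_j := Σ_{π ⊢ [j]} Σ_{(i_Q)_{Q∈π} : Σ_Q i_Q = i} Π_{Q ∈ π} g^{i_Q}_Q, where the middle sum is over all assignments of natural numbers i_Q to the blocks Q of π summing to i. Then f^i_j = Σ_{P ⊆ [j], |P| ≤ 2i} Σ_{π ⊢ P} Σ_{(i_Q)_{Q∈π} : i_Q ≥ 1, Σ_Q i_Q = i} ( Π_{k ∈ [j]∖P} g^0_{{k}} ) · Π_{Q ∈ π} g^{i_Q}_Q, where for P = ∅ the inner sum consists of the single empty product (occurring only when i = 0). -/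
/-!
Encode the orders carried by a block `Q` in the polynomial `∑ k ≤ i, g^k_Q X^k`, so that `f^i_j`
is the `i`-th coefficient of a sum over partitions of products over blocks. Splitting off the
constant term `g^0_Q` on every block amounts to choosing which blocks have order zero; if `P` is the
union of the others, a partition of `[j]` with such a choice is a partition of `P` together with one
of `[j] \ P`. As `g^0_Q = 0` for `|Q| ≥ 2`, only the partition of `[j] \ P` into singletons
contributes. On `P` a nonvanishing term has `|Q| ≤ i_Q + 1 ≤ 2 i_Q` for each block, whence
`|P| ≤ 2i`.
-/

open Finset Polynomial

section Finpartition

/-- The partition of `c = a ⊔ b`, for disjoint `a` and `b`, whose parts are those of a partition of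
`a` and those of a partition of `b`. The equation `a ⊔ b = c` is a hypothesis to avoid casts. -/
def disjSupFinpartition {L : Type*} [Lattice L] [OrderBot L] [IsModularLattice L] [DecidableEq L]
    {a b c : L} (π : Finpartition a) (ρ : Finpartition b) (hab : Disjoint a b) (hc : a ⊔ b = c) :
    Finpartition c where
  parts := π.parts ∪ ρ.parts
  supIndep := π.supIndep.union ρ.supIndep (by rwa [π.sup_parts, ρ.sup_parts])
  sup_parts := by rw [sup_union, π.sup_parts, ρ.sup_parts, hc]
  bot_notMem h := (mem_union.1 h).elim π.bot_notMem ρ.bot_notMem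

lemma disjoint_finpartition_parts {L : Type*} [Lattice L] [OrderBot L] {a b : L}
    (π : Finpartition a) (ρ : Finpartition b) (hab : Disjoint a b) :
    Disjoint π.parts ρ.parts :=
  disjoint_left.2 fun _ hπ hρ ↦ π.ne_bot hπ <| le_bot_iff.1 <| hab (π.le hπ) (ρ.le hρ)

lemma finpartition_sup_parts_sdiff {L : Type*} [GeneralizedBooleanAlgebra L] [DecidableEq L] {a : L}
    (π : Finpartition a) {T : Finset L} (hT : T ⊆ π.parts) :
    (π.parts \ T).sup id = a \ T.sup id := by
  have hdisj : Disjoint (T.sup id) ((π.parts \ T).sup id) :=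
    π.supIndep.disjoint_sup_sup hT sdiff_subset disjoint_sdiff
  have hsup : T.sup id ⊔ (π.parts \ T).sup id = a := by
    rw [← sup_union, union_sdiff_of_subset hT, π.sup_parts]
  calc
    (π.parts \ T).sup id
    _ = (T.sup id ⊔ (π.parts \ T).sup id) \ T.sup id := hdisj.sup_sdiff_cancel_left.symm
    _ = a \ T.sup id := by rw [hsup]

variable {α : Type*} [DecidableEq α] {s : Finset α}

lemma exists_one_lt_card_of_ne_bot {π : Finpartition s} (hπ : π ≠ ⊥) :
    ∃ Q ∈ π.parts, 1 < #Q := by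
  contrapose! hπ
  refine le_bot_iff.1 fun Q hQ ↦ ?_
  obtain ⟨k, rfl⟩ := card_eq_one.1 ((hπ Q hQ).antisymm (π.nonempty_of_mem_parts hQ).card_pos)
  exact ⟨{k}, Finpartition.mem_bot_iff.2 ⟨k, π.subset hQ (mem_singleton_self k), rfl⟩, le_rfl⟩

lemma sum_finpartition_sum_powerset_parts {M : Type*} [AddCommMonoid M] (s : Finset α)
    (F : Finset (Finset α) → Finset (Finset α) → M) :
    ∑ π : Finpartition s, ∑ T ∈ π.parts.powerset, F T (π.parts \ T)
      = ∑ P ∈ s.powerset, ∑ π : Finpartition P, ∑ ρ : Finpartition (s \ P), F π.parts ρ.parts := by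
  simp_rw [← Fintype.sum_prod_type']
  rw [sum_sigma', sum_sigma']
  symm
  have parts_sdiff {P : Finset α} (hP : P ⊆ s) (π : Finpartition P) (ρ : Finpartition (s \ P)) :
      (disjSupFinpartition π ρ disjoint_sdiff (union_sdiff_of_subset hP)).parts \ π.parts
        = ρ.parts :=
    union_sdiff_cancel_left (disjoint_finpartition_parts π ρ disjoint_sdiff)
  refine sum_bij (fun x hx ↦ ⟨disjSupFinpartition x.2.1 x.2.2 disjoint_sdiff
    (union_sdiff_of_subset (mem_powerset.1 (mem_sigma.1 hx).1)), x.2.1.parts⟩) ?mem ?inj ?surj ?eq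
  case mem =>
    exact fun x _ ↦ mem_sigma.2 ⟨mem_univ _, mem_powerset.2 subset_union_left⟩
  case inj =>
    rintro ⟨P, π, ρ⟩ hx ⟨P', π', ρ'⟩ hx' h
    obtain ⟨hunion, hπ⟩ := Sigma.mk.inj h
    replace hπ : π.parts = π'.parts := eq_of_heq hπ
    obtain rfl : P = P' := by rw [← π.sup_parts, ← π'.sup_parts, hπ]
    obtain rfl : π = π' := Finpartition.ext hπ
    have hP : P ⊆ s := mem_powerset.1 (mem_sigma.1 hx).1
    obtain rfl : ρ = ρ' := Finpartition.ext <| by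
      rw [← parts_sdiff hP π ρ, hunion, parts_sdiff hP π ρ']
    rfl
  case surj =>
    rintro ⟨π, T⟩ hx
    have hT : T ⊆ π.parts := mem_powerset.1 (mem_sigma.1 hx).2
    have hTs : T.sup id ⊆ s := (sup_mono hT).trans_eq π.sup_parts
    refine ⟨⟨T.sup id, π.ofSubset hT rfl,
      π.ofSubset sdiff_subset (finpartition_sup_parts_sdiff π hT)⟩, by simpa using hTs, ?_⟩
    exact Sigma.ext (Finpartition.ext (union_sdiff_of_subset hT)) HEq.rfl
  case eq =>
    rintro ⟨P, π, ρ⟩ hx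
    rw [parts_sdiff (mem_powerset.1 (mem_sigma.1 hx).1)]

variable {R : Type*} [CommSemiring R]

lemma sum_finpartition_prod_add (s : Finset α) (u v : Finset α → R) :
    ∑ π : Finpartition s, ∏ Q ∈ π.parts, (u Q + v Q)
      = ∑ P ∈ s.powerset, (∑ π : Finpartition P, ∏ Q ∈ π.parts, u Q) *
          ∑ ρ : Finpartition (s \ P), ∏ Q ∈ ρ.parts, v Q := by
  simp_rw [prod_add, sum_mul_sum]
  exact sum_finpartition_sum_powerset_parts s fun T T' ↦ (∏ Q ∈ T, u Q) * ∏ Q ∈ T', v Q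

lemma sum_finpartition_prod_eq_prod_singleton (s : Finset α) {v : Finset α → R}
    (hv : ∀ Q, 1 < #Q → v Q = 0) :
    ∑ π : Finpartition s, ∏ Q ∈ π.parts, v Q = ∏ k ∈ s, v {k} := by
  rw [Fintype.sum_eq_single ⊥, Finpartition.parts_bot, prod_map]
  · rfl
  · intro π hπ
    obtain ⟨Q, hQ, hcard⟩ := exists_one_lt_card_of_ne_bot hπ
    exact prod_eq_zero hQ (hv Q hcard)

lemma card_le_two_mul_sum_of_card_parts_le (π : Finpartition s) {c : {Q // Q ∈ π.parts} → ℕ}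
    (hpos : ∀ Q, 1 ≤ c Q) (hcard : ∀ Q, #Q.1 ≤ c Q + 1) : #s ≤ 2 * ∑ Q, c Q := by
  rw [← π.sum_card_parts, ← sum_coe_sort, mul_sum]
  exact sum_le_sum fun Q _ ↦ by linarith [hpos Q, hcard Q]

end Finpartition

section Polynomial

variable {ι A : Type*} [Fintype ι] [CommSemiring A]

lemma coeff_prod_sum_monomial [DecidableEq ι] {m : ℕ} (a : ι → Fin m → A) (n : ℕ) :
    (∏ x, ∑ k : Fin m, monomial (k : ℕ) (a x k)).coeff n
      = ∑ c : ι → Fin m, if ∑ x, (c x : ℕ) = n then ∏ x, a x (c x) else 0 := by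
  simp_rw [prod_univ_sum, Fintype.piFinset_univ, finsetSum_coeff, ← C_mul_X_pow_eq_monomial,
    prod_mul_distrib, prod_pow_eq_pow_sum, ← map_prod, coeff_C_mul_X_pow, eq_comm]

end Polynomial

section OrderCorrection

variable {α A : Type*} [CommSemiring A]

/-- The generating polynomial of the cluster functions `g^0_Q, …, g^i_Q` of a block `Q`. -/
noncomputable def clusterPolynomial (g : ℕ → Finset α → A) (i : ℕ) (Q : Finset α) : A[X] :=
  ∑ k : Fin (i + 1), monomial (k : ℕ) (g k Q)

lemma clusterPolynomial_eq_add_C (g : ℕ → Finset α → A) (i : ℕ) (Q : Finset α) :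
    clusterPolynomial g i Q = clusterPolynomial (Function.update g 0 0) i Q + C (g 0 Q) := by
  simp [clusterPolynomial, Fin.sum_univ_succ, add_comm]

variable [DecidableEq α]

/-- The `i`-th order correction `f^i_s`, for an arbitrary finite set `s` in place of `[j]`. Orders
of blocks are taken in `Fin (i + 1)`, since no order can exceed the total `i`. -/
def orderCorrection (g : ℕ → Finset α → A) (i : ℕ) (s : Finset α) : A :=
  ∑ π : Finpartition s, ∑ c : {Q // Q ∈ π.parts} → Fin (i + 1),
    if ∑ Q, (c Q : ℕ) = i then ∏ Q, g (c Q) Q.1 else 0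

lemma orderCorrection_eq_coeff (g : ℕ → Finset α → A) (i : ℕ) (s : Finset α) :
    orderCorrection g i s
      = (∑ π : Finpartition s, ∏ Q ∈ π.parts, clusterPolynomial g i Q).coeff i := by
  rw [orderCorrection, finsetSum_coeff]
  refine sum_congr rfl fun π _ ↦ ?_
  rw [← prod_coe_sort]
  exact (coeff_prod_sum_monomial (fun (Q : {Q // Q ∈ π.parts}) k ↦ g k Q.1) i).symm

theorem orderCorrection_eq_sum_powerset {g : ℕ → Finset α → A}
    (hg : ∀ S, 1 < #S → g 0 S = 0) (i : ℕ) (s : Finset α) :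
    orderCorrection g i s = ∑ P ∈ s.powerset,
      (∏ k ∈ s \ P, g 0 {k}) * orderCorrection (Function.update g 0 0) i P := by
  have hC (P : Finset α) : ∑ ρ : Finpartition (s \ P), ∏ Q ∈ ρ.parts, C (g 0 Q)
      = C (∏ k ∈ s \ P, g 0 {k}) := by
    rw [map_prod, sum_finpartition_prod_eq_prod_singleton]
    exact fun Q hQ ↦ by rw [hg Q hQ, map_zero]
  rw [orderCorrection_eq_coeff]
  simp_rw [clusterPolynomial_eq_add_C g, sum_finpartition_prod_add, hC]
  rw [finsetSum_coeff]
  refine sum_congr rfl fun P _ ↦ ?_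
  rw [coeff_mul_C, mul_comm, orderCorrection_eq_coeff]

lemma orderCorrection_update_zero (g : ℕ → Finset α → A) (i : ℕ) (s : Finset α) :
    orderCorrection (Function.update g 0 0) i s
      = ∑ π : Finpartition s, ∑ c : {Q // Q ∈ π.parts} → Fin (i + 1),
          if (∀ Q, 1 ≤ (c Q : ℕ)) ∧ ∑ Q, (c Q : ℕ) = i then ∏ Q, g (c Q) Q.1 else 0 := by
  have hprod (π : Finpartition s) (c : {Q // Q ∈ π.parts} → Fin (i + 1)) :
      ∏ Q, Function.update g 0 0 (c Q : ℕ) Q.1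
        = if ∀ Q, 1 ≤ (c Q : ℕ) then ∏ Q, g (c Q) Q.1 else 0 := by
    simp only [Function.update_apply, ite_apply, Pi.zero_apply, ← Fintype.prod_ite_zero,
      Nat.one_le_iff_ne_zero, ite_not]
  simp_rw [orderCorrection, hprod, and_comm, ite_and]

lemma orderCorrection_update_zero_eq_zero {g : ℕ → Finset α → A}
    (hg : ∀ i S, i + 2 ≤ #S → g i S = 0) {i : ℕ} {s : Finset α} (hs : 2 * i < #s) :
    orderCorrection (Function.update g 0 0) i s = 0 := by
  rw [orderCorrection_update_zero]
  refine sum_eq_zero fun π _ ↦ sum_eq_zero fun c _ ↦ ite_eq_right_iff.2 ?_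
  rintro ⟨hpos, hsum⟩
  obtain ⟨Q, hQ⟩ : ∃ Q, (c Q : ℕ) + 1 < #Q.1 := by
    by_contra! hcard
    exact hs.not_ge (hsum ▸ card_le_two_mul_sum_of_card_parts_le π hpos hcard)
  exact prod_eq_zero (mem_univ Q) (hg _ _ hQ)

theorem f_ij_representation_general (g : ℕ → Finset α → A)
    (hg : ∀ i S, i + 2 ≤ #S → g i S = 0) (s : Finset α) (i : ℕ) :
    (∑ π : Finpartition s, ∑ c : {Q // Q ∈ π.parts} → Fin (i + 1),
        if ∑ Q, (c Q : ℕ) = i then ∏ Q, g (c Q) Q.1 else 0)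
      = ∑ P ∈ s.powerset with #P ≤ 2 * i,
          ∑ π : Finpartition P, ∑ c : {Q // Q ∈ π.parts} → Fin (i + 1),
            if (∀ Q, 1 ≤ (c Q : ℕ)) ∧ ∑ Q, (c Q : ℕ) = i then
              (∏ k ∈ s \ P, g 0 {k}) * ∏ Q, g (c Q) Q.1
            else 0 := by
  calc
    orderCorrection g i s
    _ = ∑ P ∈ s.powerset,
          (∏ k ∈ s \ P, g 0 {k}) * orderCorrection (Function.update g 0 0) i P :=
        orderCorrection_eq_sum_powerset (hg 0) i s
    _ = ∑ P ∈ s.powerset with #P ≤ 2 * i,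
          (∏ k ∈ s \ P, g 0 {k}) * orderCorrection (Function.update g 0 0) i P := by
        refine (sum_filter_of_ne fun P _ hne ↦ ?_).symm
        contrapose! hne
        rw [orderCorrection_update_zero_eq_zero hg hne, mul_zero]
    _ = _ := by simp_rw [orderCorrection_update_zero, mul_sum, mul_ite, mul_zero]

end OrderCorrection

/-- Representation of the `i`-th order perturbative correction `f^i_j` in terms of the
perturbative cluster functions `g^i_S`, using that `g^i_S = 0` whenever `|S| ≥ i + 2`.
Here `[j] = Finset.Icc 1 j`, partitions are `Finpartition`s, and an assignment of orders
to the blocks of a partition `π` is encoded as a function `{Q // Q ∈ π.parts} → Fin (i+1)`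
(every assignment of naturals summing to `i` has all values at most `i`). -/
theorem f_ij_representation {A : Type*} [CommRing A] (g : ℕ → Finset ℕ → A)
    (hg : ∀ i : ℕ, ∀ S : Finset ℕ, i + 2 ≤ S.card → g i S = 0)
    (j : ℕ) (hj : 1 ≤ j) (i : ℕ) :
    (∑ π : Finpartition (Finset.Icc 1 j),
        ∑ c : {Q // Q ∈ π.parts} → Fin (i + 1),
          if (∑ Q : {Q // Q ∈ π.parts}, (c Q : ℕ)) = i then
            ∏ Q : {Q // Q ∈ π.parts}, g (c Q : ℕ) Q.1
          else 0)
      = ∑ P ∈ (Finset.Icc 1 j).powerset.filter (fun P => P.card ≤ 2 * i),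
          ∑ π : Finpartition P,
            ∑ c : {Q // Q ∈ π.parts} → Fin (i + 1),
              if (∀ Q : {Q // Q ∈ π.parts}, 1 ≤ (c Q : ℕ)) ∧
                  (∑ Q : {Q // Q ∈ π.parts}, (c Q : ℕ)) = i then
                (∏ k ∈ Finset.Icc 1 j \ P, g 0 {k}) *
                  ∏ Q : {Q // Q ∈ π.parts}, g (c Q : ℕ) Q.1
              else 0 := by
  exact f_ij_representation_general g hg (Icc 1 j) i
end

section
/- Let β > 0. For all integers j ≥ 1, ℓ ≥ 1, all b ∈ ℕ, and all t ≥ 0, the iterated exponential integral satisfies I^ℓ_j(t) ≤ ((j+b)/(j+ℓ))^b · e^{βbt}. -/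
/-!
`I^ℓ_j(t)` is the probability that `T ≤ t` for a sum `T` of independent exponential variables of
rates `βj, β(j+1), …, β(j+ℓ-1)`. Chernoff's bound `P(T ≤ t) ≤ e^{βbt} E[e^{-βbT}]` gives
`e^{βbt} ∏_{i<ℓ} (j+i)/(j+b+i)`; analytically, it amounts to letting every integration in `nestInt`
start from `-∞` after enlarging the innermost exponent to `β(j+b+ℓ-1)`. For natural `b` the product
telescopes to `∏_{i<b} (j+i)/(j+ℓ+i)`, a ratio of two products with `b` factors each, in which every
numerator is at most `j+b` and every denominator at least `j+ℓ`.
-/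

open MeasureTheory

/-- The nested integral `∫₀^t ∫₀^{s_ℓ} ⋯ ∫₀^{s_2} e^{-β(s_2+⋯+s_ℓ)} e^{a s_1} ds_1 ⋯ ds_ℓ`,
defined recursively in the number `ℓ` of integrations. -/
noncomputable def nestInt (β a : ℝ) : ℕ → ℝ → ℝ
  | 0, _ => 1
  | 1, t => ∫ s in (0:ℝ)..t, Real.exp (a * s)
  | (n + 2), t => ∫ s in (0:ℝ)..t, Real.exp (-β * s) * nestInt β a (n + 1) s

/-- The iterated exponential integral
`I^ℓ_j(t) = β^ℓ ((j+ℓ-1)!/(j-1)!) e^{-βjt} ∫₀^t ∫₀^{s_ℓ} ⋯ ∫₀^{s_2}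
e^{-β(s_2+⋯+s_ℓ)} e^{β(j+ℓ-1)s_1} ds_1 ⋯ ds_ℓ`, with `I^0_j(t) = 1`. -/
noncomputable def Iex (β : ℝ) (j ℓ : ℕ) (t : ℝ) : ℝ :=
  if ℓ = 0 then 1
  else β ^ ℓ * ((Nat.factorial (j + ℓ - 1) : ℝ) / (Nat.factorial (j - 1) : ℝ)) *
    Real.exp (-(β * j * t)) * nestInt β (β * ((j : ℝ) + (ℓ : ℝ) - 1)) ℓ t

theorem ascPochhammer_eval_add {R : Type*} [CommSemiring R] (m n : ℕ) (x : R) :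
    (ascPochhammer R (m + n)).eval x =
      (ascPochhammer R m).eval x * (ascPochhammer R n).eval (x + m) := by
  simp [← ascPochhammer_mul]

section OrderedSemiring

variable {R : Type*} [CommSemiring R] [PartialOrder R] [IsOrderedRing R] {x : R}

theorem pow_le_ascPochhammer_eval (hx : 0 ≤ x) (n : ℕ) : x ^ n ≤ (ascPochhammer R n).eval x := by
  induction n with
  | zero => simp
  | succ n ih =>
    rw [pow_succ, ascPochhammer_succ_eval]
    exact mul_le_mul ih (le_add_of_nonneg_right n.cast_nonneg) hx ((pow_nonneg hx n).trans ih)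

theorem ascPochhammer_eval_le_add_pow (hx : 0 ≤ x) (n : ℕ) :
    (ascPochhammer R n).eval x ≤ (x + n) ^ n := by
  induction n with
  | zero => simp
  | succ n ih =>
    have hxn : x + n ≤ x + (n + 1 : ℕ) := by gcongr; simp
    have hxn₀ : 0 ≤ x + n := add_nonneg hx n.cast_nonneg
    rw [pow_succ, ascPochhammer_succ_eval]
    exact mul_le_mul (ih.trans (pow_le_pow_left₀ hxn₀ hxn n)) hxn hxn₀
      (pow_nonneg (hxn₀.trans hxn) n)

end OrderedSemiring

theorem ascPochhammer_eval_div_eval_add_le {K : Type*} [Field K] [LinearOrder K]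
    [IsStrictOrderedRing K] {x : K} (hx : 0 < x) (n b : ℕ) :
    (ascPochhammer K n).eval x / (ascPochhammer K n).eval (x + b) ≤ ((x + b) / (x + n)) ^ b := by
  have hxn : 0 < x + n := by positivity
  have hP : 0 < (ascPochhammer K n).eval x := ascPochhammer_pos n x hx
  have hQ : 0 < (ascPochhammer K n).eval (x + b) := ascPochhammer_pos n _ (by positivity)
  rw [div_pow, div_le_div_iff₀ hQ (by positivity)]
  calc (ascPochhammer K n).eval x * (x + n) ^ b
      ≤ (ascPochhammer K n).eval x * (ascPochhammer K b).eval (x + n) := by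
        gcongr; exact pow_le_ascPochhammer_eval hxn.le b
    _ = (ascPochhammer K b).eval x * (ascPochhammer K n).eval (x + b) := by
        rw [← ascPochhammer_eval_add, add_comm, ascPochhammer_eval_add]
    _ ≤ (x + b) ^ b * (ascPochhammer K n).eval (x + b) := by
        gcongr; exact ascPochhammer_eval_le_add_pow hx.le b

theorem integral_exp_mul_le {c : ℝ} (hc : 0 < c) (u t : ℝ) :
    ∫ s in u..t, Real.exp (c * s) ≤ Real.exp (c * t) / c := by
  rw [intervalIntegral.integral_comp_mul_left Real.exp hc.ne', integral_exp, smul_eq_mul,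
    inv_mul_eq_div]
  gcongr
  exact sub_le_self _ (Real.exp_pos _).le

theorem integral_le_mul_exp_div {f : ℝ → ℝ} (hf : Continuous f) {A c u t : ℝ} (hA : 0 ≤ A)
    (hc : 0 < c) (hut : u ≤ t) (hfA : ∀ s ∈ Set.Icc u t, f s ≤ A * Real.exp (c * s)) :
    ∫ s in u..t, f s ≤ A * (Real.exp (c * t) / c) :=
  calc ∫ s in u..t, f s
      ≤ ∫ s in u..t, A * Real.exp (c * s) :=
        intervalIntegral.integral_mono_on hut (hf.intervalIntegrable _ _)
          (Continuous.intervalIntegrable (by fun_prop) _ _) hfA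
    _ = A * ∫ s in u..t, Real.exp (c * s) := intervalIntegral.integral_const_mul _ _
    _ ≤ A * (Real.exp (c * t) / c) := by gcongr; exact integral_exp_mul_le hc u t

theorem continuous_nestInt (β a : ℝ) : ∀ n, Continuous (nestInt β a n)
  | 0 => by simpa only [nestInt] using continuous_const
  | 1 => by
    have h : Continuous fun s : ℝ => Real.exp (a * s) := by fun_prop
    exact intervalIntegral.continuous_primitive h.intervalIntegrable 0
  | n + 2 => by
    have ih := continuous_nestInt β a (n + 1)
    have h : Continuous fun s => Real.exp (-β * s) * nestInt β a (n + 1) s := by fun_prop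
    exact intervalIntegral.continuous_primitive h.intervalIntegrable 0

theorem nestInt_succ_le {β : ℝ} (hβ : 0 < β) {a c : ℝ} (hc : 0 < c) {n : ℕ}
    (ha : a ≤ β * (c + n)) {t : ℝ} (ht : 0 ≤ t) :
    nestInt β a (n + 1) t ≤
      Real.exp (β * c * t) / (β ^ (n + 1) * (ascPochhammer ℝ (n + 1)).eval c) := by
  induction n generalizing c t with
  | zero =>
    have hac : a ≤ β * c := by simpa using ha
    calc nestInt β a 1 t
        ≤ 1 * (Real.exp (β * c * t) / (β * c)) := by
          refine integral_le_mul_exp_div (by fun_prop) zero_le_one (by positivity) ht fun s hs => ?_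
          rw [one_mul]
          exact Real.exp_le_exp.2 (mul_le_mul_of_nonneg_right hac hs.1)
      _ = _ := by simp
  | succ n ih =>
    set P := (ascPochhammer ℝ (n + 1)).eval (c + 1) with hP_def
    have hP : 0 < P := ascPochhammer_pos _ _ (by positivity)
    have hcP : (ascPochhammer ℝ (n + 2)).eval c = c * P := by
      simp [show n + 2 = 1 + (n + 1) by ring, ascPochhammer_eval_add, hP_def]
    have integrand_le {s : ℝ} (hs : 0 ≤ s) :
        Real.exp (-β * s) * nestInt β a (n + 1) s ≤
          (β ^ (n + 1) * P)⁻¹ * Real.exp (β * c * s) :=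
      calc Real.exp (-β * s) * nestInt β a (n + 1) s
          ≤ Real.exp (-β * s) * (Real.exp (β * (c + 1) * s) / (β ^ (n + 1) * P)) := by
            gcongr
            exact ih (by positivity) (by push_cast at ha; linarith) hs
        _ = (β ^ (n + 1) * P)⁻¹ * Real.exp (-β * s + β * (c + 1) * s) := by
            rw [Real.exp_add]; ring
        _ = (β ^ (n + 1) * P)⁻¹ * Real.exp (β * c * s) := by ring_nf
    have hcont := continuous_nestInt β a (n + 1)
    calc nestInt β a (n + 2) t
        ≤ (β ^ (n + 1) * P)⁻¹ * (Real.exp (β * c * t) / (β * c)) :=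
          integral_le_mul_exp_div (by fun_prop) (by positivity) (by positivity) ht
            fun s hs => integrand_le hs.1
      _ = _ := by rw [hcP, pow_succ β (n + 1)]; field_simp

theorem Iex_succ (β : ℝ) {j : ℕ} (hj : 1 ≤ j) (n : ℕ) (t : ℝ) :
    Iex β j (n + 1) t =
      β ^ (n + 1) * (ascPochhammer ℝ (n + 1)).eval (j : ℝ) * Real.exp (-(β * j * t)) *
        nestInt β (β * (j + n)) (n + 1) t := by
  obtain ⟨k, rfl⟩ := Nat.exists_eq_add_of_le' hj
  have hfac : ((k + 1 + n).factorial : ℝ) / k.factorial =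
      (ascPochhammer ℝ (n + 1)).eval ((k + 1 : ℕ) : ℝ) := by
    rw [div_eq_iff (by positivity), mul_comm, Nat.cast_succ, factorial_mul_ascPochhammer,
      add_right_comm, add_assoc]
  rw [Iex, if_neg n.succ_ne_zero, Nat.add_sub_cancel, ← add_assoc, Nat.add_sub_cancel, hfac,
    Nat.cast_succ n, ← add_assoc, add_sub_cancel_right]

theorem Iex_le_ascPochhammer_div_mul_exp {β : ℝ} (hβ : 0 < β) {j : ℕ} (hj : 1 ≤ j) (ℓ : ℕ)
    {b : ℝ} (hb : 0 ≤ b) {t : ℝ} (ht : 0 ≤ t) :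
    Iex β j ℓ t ≤
      (ascPochhammer ℝ ℓ).eval (j : ℝ) / (ascPochhammer ℝ ℓ).eval (j + b) *
        Real.exp (β * b * t) := by
  cases ℓ with
  | zero =>
    simp only [Iex, if_true, ascPochhammer_zero, Polynomial.eval_one, div_one, one_mul]
    exact Real.one_le_exp (by positivity)
  | succ n =>
    have hj₀ : (0 : ℝ) < j := by exact_mod_cast hj
    set P := (ascPochhammer ℝ (n + 1)).eval (j : ℝ)
    set Q := (ascPochhammer ℝ (n + 1)).eval (j + b)
    have hP : 0 < P := ascPochhammer_pos _ _ hj₀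
    calc Iex β j (n + 1) t
        = β ^ (n + 1) * P * Real.exp (-(β * j * t)) * nestInt β (β * (j + n)) (n + 1) t :=
          Iex_succ β hj n t
      _ ≤ β ^ (n + 1) * P * Real.exp (-(β * j * t)) *
            (Real.exp (β * (j + b) * t) / (β ^ (n + 1) * Q)) := by
          gcongr
          exact nestInt_succ_le hβ (by positivity) (by gcongr; linarith) ht
      _ = P / Q * Real.exp (-(β * j * t) + β * (j + b) * t) := by
          rw [Real.exp_add]; field_simp
      _ = P / Q * Real.exp (β * b * t) := by ring_nf

/-- Polynomial decay estimate: `I^ℓ_j(t) ≤ ((j+b)/(j+ℓ))^b e^{βbt}`. -/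
theorem Iex_poly_bound (β : ℝ) (hβ : 0 < β) (j ℓ : ℕ) (hj : 1 ≤ j) (hℓ : 1 ≤ ℓ)
    (b : ℕ) (t : ℝ) (ht : 0 ≤ t) :
    Iex β j ℓ t ≤ (((j : ℝ) + b) / ((j : ℝ) + ℓ)) ^ b * Real.exp (β * b * t) := by
  have hj₀ : (0 : ℝ) < j := by exact_mod_cast hj
  calc Iex β j ℓ t
      ≤ (ascPochhammer ℝ ℓ).eval (j : ℝ) / (ascPochhammer ℝ ℓ).eval (j + b : ℝ) *
          Real.exp (β * b * t) := Iex_le_ascPochhammer_div_mul_exp hβ hj ℓ b.cast_nonneg ht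
    _ ≤ (((j : ℝ) + b) / ((j : ℝ) + ℓ)) ^ b * Real.exp (β * b * t) := by
        gcongr
        exact ascPochhammer_eval_div_eval_add_le hj₀ ℓ b
end

section
/- Let j ≥ 1 be an integer, let σ be a set partition of [j] = {1,…,j}, and let k, ℓ ∈ [j]. Define a^σ_{k,ℓ} := Σ (-1)^(|π|-1)·(|π|-1)!, where the sum is over all coarsenings π of σ such that k and ℓ lie in the same block of π. Let Q be the block of σ containing k and R the block of σ containing ℓ. Then: a^σ_{k,ℓ} = 1 if |σ| = 1; if |σ| = 2 then a^σ_{k,ℓ} = 1 when Q ≠ R and a^σ_{k,ℓ} = 0 when Q = R; and a^σ_{k,ℓ} = 0 whenever |σ| ≥ 3. -/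
open scoped Classical

/-!
A function out of a finite set is the same as its kernel together with an injection of the quotient,
so counting the functions into an `n`-element set that are constant on the blocks of `σ` gives
`X ^ |σ| = ∑ π, X (X - 1) ⋯ (X - |π| + 1)`, where `π` runs over the coarsenings of `σ`. The
coefficient of `X` on the right is `∑ π, (-1) ^ (|π| - 1) (|π| - 1)!`, so this sum is `1` if `σ` has
one block and `0` otherwise. The coarsenings of `σ` having `k` and `ℓ` in a common block are exactly
the coarsenings of the partition obtained from `σ` by merging `Q` and `R`, so `a^σ_{k,ℓ}` is `1` if
`Q` and `R` are the only blocks of `σ`, and `0` otherwise.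
-/

section DescPochhammer

open Polynomial Nat

variable (R : Type*) [CommRing R]

theorem descPochhammer_eval_neg_one (n : ℕ) :
    (descPochhammer R n).eval (-1) = (-1) ^ n * (n ! : R) := by
  rw [← ascPochhammer_eval_one, ← neg_neg (1 : R), ascPochhammer_eval_neg_eq_descPochhammer,
    ← mul_assoc, neg_neg, ← mul_pow, neg_one_mul, neg_neg, one_pow, one_mul]

theorem coeff_one_descPochhammer_succ (n : ℕ) :
    (descPochhammer R (n + 1)).coeff 1 = (-1) ^ n * (n ! : R) := by
  rw [descPochhammer_succ_left, coeff_X_mul, coeff_zero_eq_eval_zero, eval_comp, eval_sub, eval_X,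
    eval_one, zero_sub, descPochhammer_eval_neg_one]

end DescPochhammer

section SetoidSums

open Polynomial Nat

variable {α β : Type*}

/-- Functions with kernel `r` correspond to injections of the quotient by `r`, through which they
factor. -/
def kerEqEquivEmbedding (r : Setoid α) : {f : α → β // Setoid.ker f = r} ≃ (Quotient r ↪ β) where
  toFun f := ⟨Quotient.lift f.1 f.2.ge, (Setoid.lift_injective_iff_ker_eq_of_le f.2.ge).2 f.2⟩
  invFun e := ⟨e ∘ Quotient.mk r, Setoid.ext fun _ _ => (e.apply_eq_iff_eq _ _).trans Quotient.eq⟩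
  right_inv e := by
    ext ⟨x⟩
    rfl

variable [Finite α] [Fintype (Setoid α)]

theorem pow_card_quotient_eq_sum_descFactorial (s : Setoid α) (n : ℕ) :
    n ^ Nat.card (Quotient s) = ∑ r with s ≤ r, n.descFactorial (Nat.card (Quotient r)) := by
  have := Fintype.ofFinite α
  calc n ^ Nat.card (Quotient s)
      = Finset.card {f : α → Fin n | s ≤ Setoid.ker f} := by
        rw [← Fintype.card_subtype, Fintype.card_congr (Setoid.liftEquiv s)]
        simp [Nat.card_eq_fintype_card]
    _ = ∑ r with s ≤ r, Finset.card {f ∈ {f : α → Fin n | s ≤ Setoid.ker f} | Setoid.ker f = r} :=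
        Finset.card_eq_sum_card_fiberwise fun f hf => by simpa using hf
    _ = ∑ r with s ≤ r, n.descFactorial (Nat.card (Quotient r)) := by
        refine Finset.sum_congr rfl fun r hr => ?_
        have fiber_eq : ({f ∈ {f : α → Fin n | s ≤ Setoid.ker f} | Setoid.ker f = r} : Finset _) =
            ({f | Setoid.ker f = r} : Finset _) := by
          grind
        rw [fiber_eq, ← Fintype.card_subtype, Fintype.card_congr (kerEqEquivEmbedding r),
          Fintype.card_embedding_eq, Fintype.card_fin, Nat.card_eq_fintype_card]

theorem X_pow_card_quotient_eq_sum_descPochhammer (s : Setoid α) :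
    (X : ℤ[X]) ^ Nat.card (Quotient s) =
      ∑ r with s ≤ r, descPochhammer ℤ (Nat.card (Quotient r)) := by
  refine eq_of_infinite_eval_eq _ _ <|
    (Set.infinite_range_of_injective (Nat.cast_injective (R := ℤ))).mono ?_
  rintro _ ⟨n, rfl⟩
  simp only [Set.mem_ofPred_eq, eval_pow, eval_X, eval_finsetSum,
    descPochhammer_eval_eq_descFactorial]
  exact_mod_cast pow_card_quotient_eq_sum_descFactorial s n

theorem sum_coarser_setoid_neg_one_pow_mul_factorial [Nonempty α] (s : Setoid α) :
    ∑ r with s ≤ r, (-1 : ℤ) ^ (Nat.card (Quotient r) - 1) * ((Nat.card (Quotient r) - 1)! : ℤ) =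
      if s = ⊤ then 1 else 0 := by
  have weight_eq (r : Setoid α) :
      (-1 : ℤ) ^ (Nat.card (Quotient r) - 1) * ((Nat.card (Quotient r) - 1)! : ℤ) =
        (descPochhammer ℤ (Nat.card (Quotient r))).coeff 1 := by
    have : Nonempty (Quotient r) := Nonempty.map (Quotient.mk r) ‹Nonempty α›
    rw [← coeff_one_descPochhammer_succ, Nat.sub_add_cancel Nat.card_pos]
  have card_eq_one_iff : 1 = Nat.card (Quotient s) ↔ s = ⊤ := by
    rw [eq_comm, Nat.card_eq_one_iff_unique, Quotient.subsingleton_iff,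
      and_iff_left (Nonempty.map (Quotient.mk s) ‹Nonempty α›)]
  simp only [weight_eq, ← finsetSum_coeff, ← X_pow_card_quotient_eq_sum_descPochhammer,
    coeff_X_pow, card_eq_one_iff]

end SetoidSums

section MergeClasses

variable {α : Type*}

/-- The equivalence relation obtained from `s` by merging the classes of `a` and `b`. -/
def mergeClasses (s : Setoid α) (a b : α) : Setoid α where
  r x y := s x y ∨ (s x a ∨ s x b) ∧ (s y a ∨ s y b)
  iseqv :=
    { refl := fun x => .inl (s.refl x)
      symm := fun h => h.imp s.symm And.symm
      trans := by
        have transfer {x y : α} (h : s x y) : s x a ∨ s x b ↔ s y a ∨ s y b :=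
          or_congr ⟨s.trans (s.symm h), s.trans h⟩ ⟨s.trans (s.symm h), s.trans h⟩
        rintro x y z (hxy | ⟨hx, hy⟩) (hyz | ⟨hy', hz⟩)
        · exact .inl (s.trans hxy hyz)
        · exact .inr ⟨(transfer hxy).2 hy', hz⟩
        · exact .inr ⟨hx, (transfer hyz).1 hy⟩
        · exact .inr ⟨hx, hz⟩ }

theorem mergeClasses_le_iff {s r : Setoid α} {a b : α} :
    mergeClasses s a b ≤ r ↔ s ≤ r ∧ r a b := by
  refine ⟨fun h => ⟨fun x y hxy => h (.inl hxy), h (.inr ⟨.inl (s.refl a), .inr (s.refl b)⟩)⟩, ?_⟩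
  rintro ⟨hsr, hab⟩ x y (hxy | ⟨hx, hy⟩)
  · exact hsr hxy
  · have related_a {z : α} (hz : s z a ∨ s z b) : r z a :=
      hz.elim (fun h => hsr h) fun h => r.trans (hsr h) (r.symm hab)
    exact r.trans (related_a hx) (r.symm (related_a hy))

theorem mergeClasses_eq_top_iff {s : Setoid α} {a b : α} :
    mergeClasses s a b = ⊤ ↔ ∀ x, s x a ∨ s x b := by
  rw [Setoid.eq_top_iff]
  refine ⟨fun h x => (h x a).elim .inl And.left, fun h x y => .inr ⟨h x, h y⟩⟩

end MergeClasses

section FinpartitionSetoid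

variable {α : Type*} [DecidableEq α] {s : Finset α}

/-- The equivalence relation of lying in the same part of `π`, as a setoid on the subtype of `s`. -/
def partSetoid (π : Finpartition s) : Setoid s :=
  Setoid.ker fun x : s => π.part x

theorem partSetoid_apply {π : Finpartition s} {x y : s} :
    partSetoid π x y ↔ π.part x = π.part y :=
  Iff.rfl

theorem partSetoid_le_partSetoid_iff {π ρ : Finpartition s} :
    partSetoid π ≤ partSetoid ρ ↔ π ≤ ρ := by
  constructor
  · intro h P hP
    obtain ⟨a, ha, rfl⟩ := π.part_surjOn hP
    refine ⟨ρ.part a, ρ.part_mem.2 ha, fun b hb => ?_⟩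
    have hbs := π.part_subset a hb
    rw [π.mem_part_iff_part_eq_part hbs ha] at hb
    exact (ρ.mem_part_iff_part_eq_part hbs ha).2 (h (x := ⟨b, hbs⟩) (y := ⟨a, ha⟩) hb)
  · intro h x y hxy
    obtain ⟨C, hC, part_le⟩ := h (π.part_mem.2 x.2)
    have hy : (y : α) ∈ π.part x := (partSetoid_apply.1 hxy) ▸ π.mem_part y.2
    exact (ρ.part_eq_of_mem hC (part_le (π.mem_part x.2))).trans
      (ρ.part_eq_of_mem hC (part_le hy)).symm

theorem partSetoid_surjective : Function.Surjective (partSetoid (s := s)) := by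
  intro r
  let classOf : α → Option (Quotient r) :=
    Function.extend (↑) (fun x : s => some ⟦x⟧) fun _ => none
  have classOf_coe (x : s) : classOf x = some ⟦x⟧ :=
    Subtype.val_injective.extend_apply _ _ x
  refine ⟨Finpartition.ofSetSetoid (Setoid.ker classOf) s, Setoid.ext fun x y => ?_⟩
  rw [partSetoid_apply, eq_comm, ← Finpartition.mem_part_iff_part_eq_part _ y.2 x.2,
    Finpartition.mem_part_ofSetSetoid_iff_rel, Setoid.ker_def, classOf_coe, classOf_coe,
    Option.some_inj, Quotient.eq]
  simp

/-- The correspondence `partSetoid` between partitions of `s` and equivalence relations on `s`; in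
both orders the smaller element is the finer one. -/
noncomputable def finpartitionOrderIsoSetoid (s : Finset α) : Finpartition s ≃o Setoid s :=
  RelIso.ofSurjective
    (OrderEmbedding.ofMapLEIff partSetoid fun _ _ => partSetoid_le_partSetoid_iff)
    partSetoid_surjective

theorem card_quotient_partSetoid (π : Finpartition s) :
    Nat.card (Quotient (partSetoid π)) = π.parts.card := by
  have range_part : Set.range (fun x : s => π.part x) = π.parts := by
    rw [← π.part_surjOn.image_eq_of_mapsTo fun _ => π.part_mem.2, Set.image_eq_range]
    rfl
  calc Nat.card (Quotient (partSetoid π))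
      = Nat.card (Set.range fun x : s => π.part x) :=
        Nat.card_congr (Setoid.quotientKerEquivRange _)
    _ = π.parts.card := by simp [range_part]

theorem partSetoid_iff_exists_mem_parts {π : Finpartition s} {x y : s} :
    partSetoid π x y ↔ ∃ B ∈ π.parts, (x : α) ∈ B ∧ (y : α) ∈ B := by
  rw [partSetoid_apply, ← π.mem_part_iff_part_eq_part x.2 y.2, Finpartition.mem_part_iff_exists]

theorem mergeClasses_partSetoid_eq_top_iff {σ : Finpartition s} {x y : s} :
    mergeClasses (partSetoid σ) x y = ⊤ ↔ σ.parts = {σ.part x, σ.part y} := by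
  simp only [mergeClasses_eq_top_iff, partSetoid_apply]
  constructor
  · intro h
    refine Finset.Subset.antisymm (fun P hP => ?_) (by simp [Finset.insert_subset_iff])
    obtain ⟨a, ha, rfl⟩ := σ.part_surjOn hP
    simpa using h ⟨a, ha⟩
  · intro h z
    have part_z_mem := σ.part_mem.2 z.2
    rw [h] at part_z_mem
    simpa using part_z_mem

end FinpartitionSetoid

section Coarsenings

open Nat

variable {α : Type*} [DecidableEq α] {s : Finset α}

theorem sum_coarsening_joining_eq_ite (σ : Finpartition s) (x y : s) :
    (∑ π : Finpartition s, if σ ≤ π ∧ ∃ B ∈ π.parts, (x : α) ∈ B ∧ (y : α) ∈ B then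
        (-1 : ℤ) ^ (π.parts.card - 1) * ((π.parts.card - 1)! : ℤ) else 0) =
      if σ.parts = {σ.part x, σ.part y} then 1 else 0 := by
  have : Nonempty s := ⟨x⟩
  let _ : Fintype (Setoid s) := Fintype.ofEquiv _ (finpartitionOrderIsoSetoid s).toEquiv
  have joining_iff (π : Finpartition s) : (σ ≤ π ∧ ∃ B ∈ π.parts, (x : α) ∈ B ∧ (y : α) ∈ B) ↔
      mergeClasses (partSetoid σ) x y ≤ partSetoid π := by
    rw [mergeClasses_le_iff, partSetoid_le_partSetoid_iff, partSetoid_iff_exists_mem_parts]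
  simp only [joining_iff, ← mergeClasses_partSetoid_eq_top_iff, ← card_quotient_partSetoid,
    ← sum_coarser_setoid_neg_one_pow_mul_factorial, Finset.sum_filter]
  exact Fintype.sum_equiv (finpartitionOrderIsoSetoid s).toEquiv _ _ fun _ => rfl

theorem coefficient_a_formula_general (σ : Finpartition s) {k l : α} {Q R : Finset α}
    (hQ : Q ∈ σ.parts) (hkQ : k ∈ Q) (hR : R ∈ σ.parts) (hlR : l ∈ R) (a : ℤ)
    (ha : a = ∑ π : Finpartition s,
      if σ ≤ π ∧ ∃ B ∈ π.parts, k ∈ B ∧ l ∈ B then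
        (-1 : ℤ) ^ (π.parts.card - 1) * ((π.parts.card - 1)! : ℤ)
      else 0) :
    (σ.parts.card = 1 → a = 1) ∧
    (σ.parts.card = 2 → (Q ≠ R → a = 1) ∧ (Q = R → a = 0)) ∧
    (3 ≤ σ.parts.card → a = 0) := by
  have a_eq_ite : a = if σ.parts = {Q, R} then 1 else 0 := by
    rw [ha, sum_coarsening_joining_eq_ite σ ⟨k, σ.le hQ hkQ⟩ ⟨l, σ.le hR hlR⟩,
      σ.part_eq_of_mem hQ hkQ, σ.part_eq_of_mem hR hlR]
  have pair_subset : {Q, R} ⊆ σ.parts := by simp [Finset.insert_subset_iff, hQ, hR]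
  have a_eq_one (h : σ.parts.card ≤ Finset.card {Q, R}) : a = 1 :=
    a_eq_ite.trans (if_pos (Finset.eq_of_subset_of_card_le pair_subset h).symm)
  have a_eq_zero (h : Finset.card {Q, R} < σ.parts.card) : a = 0 :=
    a_eq_ite.trans (if_neg fun parts_eq => h.ne' (congrArg Finset.card parts_eq))
  refine ⟨fun h => a_eq_one ?_, fun h => ⟨fun hQR => a_eq_one ?_, fun hQR => a_eq_zero ?_⟩,
    fun h => a_eq_zero (Finset.card_le_two.trans_lt h)⟩
  · exact h.trans_le (Finset.card_pos.2 (Finset.insert_nonempty Q {R}))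
  · rw [h, Finset.card_pair hQR]
  · simp [h, hQR]

end Coarsenings

/-- Computation of the coefficients `a^σ_{k,ℓ}` in the cluster hierarchy:
`a^σ_{k,ℓ}` is the sum of `(-1)^(|π|-1)(|π|-1)!` over all coarsenings `π` of `σ`
in which `k` and `ℓ` lie in the same block.  With `Q` (resp. `R`) the block of `σ`
containing `k` (resp. `ℓ`): `a = 1` if `|σ| = 1`; if `|σ| = 2`, then `a = 1` when
`Q ≠ R` and `a = 0` when `Q = R`; and `a = 0` whenever `|σ| ≥ 3`. -/
theorem coefficient_a_formula (j : ℕ) (hj : 1 ≤ j) (σ : Finpartition (Finset.Icc 1 j))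
    (k l : ℕ) (hk : k ∈ Finset.Icc 1 j) (hl : l ∈ Finset.Icc 1 j)
    (Q R : Finset ℕ) (hQ : Q ∈ σ.parts) (hkQ : k ∈ Q) (hR : R ∈ σ.parts) (hlR : l ∈ R)
    (a : ℤ)
    (ha : a = ∑ π : Finpartition (Finset.Icc 1 j),
      if σ ≤ π ∧ ∃ B ∈ π.parts, k ∈ B ∧ l ∈ B then
        (-1 : ℤ) ^ (π.parts.card - 1) * (Nat.factorial (π.parts.card - 1) : ℤ)
      else 0) :
    (σ.parts.card = 1 → a = 1) ∧
    (σ.parts.card = 2 → (Q ≠ R → a = 1) ∧ (Q = R → a = 0)) ∧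
    (3 ≤ σ.parts.card → a = 0) :=
  coefficient_a_formula_general σ hQ hkQ hR hlR a ha
end
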